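/- Let X₁, X₂ be positive semidefinite operators on H^{⊗n} (dim H = d) each commuting with the tensor-permutation action of S_n, and let Σ̄_k denote the normalized projection onto the symmetric subspace of H^{⊗k} (i.e., Π^{(k)}/Tr Π^{(k)}). Then Tr(Σ̄_{2n}(X₁⊗X₂)) ≥ Tr(Σ̄_n (X₁X₂)) / (2n)^{d−1} ≥ 0. -/

import Mathlib

open scoped ComplexOrder BigOperators Kronecker

/-!
Let `d = dim H` and `D k = (k + d - 1).choose k`. The operator `Σ̄_k` is the average of the
coherent states `ψ^{⊗k} (ψ^{⊗k})†` over unit vectors `ψ`, with normalization `D k`: in polar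
coordinates the entries of that average are moments of a standard complex Gaussian vector, which
count permutations. Hence `Tr (Σ̄_{2n} (X₁ ⊗ X₂))` is the mean of the product of the quadratic
forms of `X₁` and `X₂` at `v = ψ^{⊗n}`. Put `K = v v† - Σ̄_n`, a Hermitian matrix of mean zero.
Averaging `0 ≤ Tr (K X₁ K X₂)` bounds that mean below by `Tr (Σ̄_n X₁ Σ̄_n X₂)`. As `X₁` commutes
with the symmetric projection, this is `Tr (Σ̄_n X₁ X₂) / D n`, and `D n ≤ (2n)^(d-1)`.
-/

open scoped ComplexConjugate Nat Matrix

open Matrix MeasureTheory Metric Set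

section Polar

variable {E F : Type*} [NormedAddCommGroup E] [NormedSpace ℝ E] [FiniteDimensional ℝ E]
  [MeasurableSpace E] [BorelSpace E] [NormedAddCommGroup F] [NormedSpace ℝ F]

lemma integral_volumeIoiPow (n : ℕ) (g : ℝ → F) :
    ∫ r : Ioi (0 : ℝ), g r ∂Measure.volumeIoiPow n = ∫ r in Ioi (0 : ℝ), r ^ n • g r := by
  simp only [Measure.volumeIoiPow, ENNReal.ofReal]
  rw [integral_withDensity_eq_integral_smul (by fun_prop),
    integral_subtype_comap measurableSet_Ioi fun r ↦ Real.toNNReal (r ^ n) • g r]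
  refine setIntegral_congr_fun measurableSet_Ioi fun r hr ↦ ?_
  rw [NNReal.smul_def, Real.coe_toNNReal _ (pow_nonneg hr.out.le _)]

lemma integral_norm_smul_of_homogeneous [Nontrivial E] (μ : Measure E) [μ.IsAddHaarMeasure]
    {f : E → F} {k : ℕ} (hf : ∀ r : ℝ, 0 < r → ∀ x, f (r • x) = r ^ k • f x) (g : ℝ → ℝ) :
    ∫ x, g ‖x‖ • f x ∂μ = (∫ r in Ioi (0 : ℝ), r ^ (Module.finrank ℝ E - 1 + k) * g r) •
      ∫ x : sphere (0 : E) 1, f x ∂μ.toSphere := by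
  have hpolar (x : ({0}ᶜ : Set E)) : g ‖x.1‖ • f x =
      ((homeomorphUnitSphereProd E x).2.1 ^ k * g (homeomorphUnitSphereProd E x).2) •
        f (homeomorphUnitSphereProd E x).1 := by
    have hx : 0 < ‖x.1‖ := norm_pos_iff.2 x.2
    rw [homeomorphUnitSphereProd_apply_fst_coe, homeomorphUnitSphereProd_apply_snd_coe,
      mul_comm, mul_smul, ← hf _ hx, smul_inv_smul₀ hx.ne']
  calc
    ∫ x, g ‖x‖ • f x ∂μ = ∫ x : ({0}ᶜ : Set E), g ‖x.1‖ • f x ∂(μ.comap (↑)) := by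
      rw [integral_subtype_comap (measurableSet_singleton _).compl fun x ↦ g ‖x‖ • f x,
        restrict_compl_singleton]
    _ = ∫ p, (p.2.1 ^ k * g p.2) • f p.1
          ∂μ.toSphere.prod (.volumeIoiPow (Module.finrank ℝ E - 1)) := by
      simp_rw [hpolar]
      exact μ.measurePreserving_homeomorphUnitSphereProd.integral_comp
        (Homeomorph.measurableEmbedding _) fun p ↦ (p.2.1 ^ k * g p.2) • f p.1
    _ = _ := by
      rw [← integral_prod_swap]
      refine (integral_prod_smul (fun r : Ioi (0 : ℝ) ↦ r.1 ^ k * g r)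
        fun x : sphere (0 : E) 1 ↦ f x).trans ?_
      rw [integral_volumeIoiPow _ fun r ↦ r ^ k * g r]
      simp only [smul_eq_mul, ← mul_assoc, pow_add]

end Polar

section Words

variable {ι α : Type*} [Fintype ι] [DecidableEq α]

/-- The multiplicity of the letter `a` in the word `w`. Words over the alphabet `α` with positions
in `ι` index the standard basis of `H^{⊗ι}`; two of them are in the same orbit of the permutations
of `ι` iff they have the same letter counts. -/
def letterCount (w : ι → α) (a : α) : ℕ := Fintype.card {i // w i = a}

lemma letterCount_comp_perm (w : ι → α) (σ : Equiv.Perm ι) :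
    letterCount (w ∘ σ) = letterCount w :=
  funext fun _ ↦ Fintype.card_congr (σ.subtypeEquiv fun _ ↦ Iff.rfl)

lemma exists_comp_perm_eq_of_letterCount_eq {w w' : ι → α}
    (h : letterCount w = letterCount w') : ∃ σ : Equiv.Perm ι, w ∘ σ = w' := by
  have e (a : α) : {i // w' i = a} ≃ {i // w i = a} :=
    Fintype.equivOfCardEq (congrFun h a).symm
  refine ⟨(Equiv.sigmaFiberEquiv w').symm.trans
    ((Equiv.sigmaCongrRight e).trans (Equiv.sigmaFiberEquiv w)), funext fun i ↦ ?_⟩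
  exact (e (w' i) ⟨i, rfl⟩).2

lemma prod_comp_eq_prod_pow_letterCount [Fintype α] {M : Type*} [CommMonoid M] (w : ι → α)
    (z : α → M) : ∏ i, z (w i) = ∏ a, z a ^ letterCount w a := by
  rw [← Finset.prod_fiberwise' _ w z]
  simp [letterCount, Fintype.card_subtype]

variable [DecidableEq ι] [Fintype α]

lemma card_perm_comp_eq_self (w w' : ι → α) :
    Fintype.card {σ : Equiv.Perm ι // w ∘ σ = w'} =
      ∏ a, if letterCount w a = letterCount w' a then (letterCount w a)! else 0 := by
  by_cases h : letterCount w = letterCount w'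
  · obtain ⟨τ, rfl⟩ := exists_comp_perm_eq_of_letterCount_eq h
    have e : {σ : Equiv.Perm ι // w ∘ σ = w ∘ τ} ≃ {σ : Equiv.Perm ι // w ∘ σ = w} :=
      (Equiv.mulRight τ⁻¹).subtypeEquiv fun σ ↦ by
        rw [Equiv.coe_mulRight, Equiv.Perm.coe_mul, ← Function.comp_assoc, Equiv.Perm.inv_def,
          Equiv.comp_symm_eq]
    rw [Fintype.card_congr e, DomMulAct.stabilizer_card, ← h]
    simp [letterCount]
  · obtain ⟨a, ha⟩ := Function.ne_iff.1 h
    rw [Finset.prod_eq_zero (Finset.mem_univ a) (if_neg ha), Fintype.card_eq_zero_iff]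
    exact ⟨fun σ ↦ h (by rw [← σ.2, letterCount_comp_perm])⟩

end Words

section Gaussian

lemma integral_pow_mul_exp_neg_sq (m : ℕ) :
    ∫ r in Ioi (0 : ℝ), r ^ (2 * m + 1) * Real.exp (-r ^ 2) = m ! / 2 := by
  have h := integral_rpow_mul_exp_neg_rpow (p := 2) (q := (2 * m + 1 : ℕ)) two_pos
    (by linarith [(2 * m + 1).cast_nonneg (α := ℝ)])
  rw [show (((2 * m + 1 : ℕ) + 1 : ℝ) / 2) = m + 1 by push_cast; ring,
    Real.Gamma_nat_eq_factorial] at h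
  simp only [Real.rpow_natCast, Real.rpow_two] at h
  rw [h]; ring

lemma integral_exp_neg_norm_sq_mul_pow_mul_conj_pow (a b : ℕ) :
    ∫ z : ℂ, (Real.exp (-‖z‖ ^ 2) : ℂ) * (z ^ a * conj z ^ b) =
      if a = b then (Real.pi : ℂ) * a ! else 0 := by
  split_ifs with h
  · subst h
    have h := Complex.integral_rpow_mul_exp_neg_rpow (p := 2) (q := (2 * a : ℕ)) one_le_two
      (by linarith [(2 * a).cast_nonneg (α := ℝ)])
    rw [show (((2 * a : ℕ) + 2 : ℝ) / 2) = a + 1 by push_cast; ring,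
      Real.Gamma_nat_eq_factorial, mul_div_cancel_left₀ _ two_ne_zero] at h
    simp only [Real.rpow_natCast, Real.rpow_two] at h
    rw [← Complex.ofReal_natCast, ← Complex.ofReal_mul, ← h, ← integral_complex_ofReal]
    congr with z
    rw [← mul_pow, Complex.mul_conj', pow_mul]
    push_cast
    ring
  · set c : Circle := Circle.exp (Real.pi / (a - b)) with hc
    have hab : (a - b : ℂ) ≠ 0 := sub_ne_zero.2 (Nat.cast_injective.ne h)
    have hphase : (c : ℂ) ^ a * conj (c : ℂ) ^ b = -1 := by
      rw [hc, Circle.coe_exp, ← Complex.exp_conj, ← Complex.exp_nat_mul, ← Complex.exp_nat_mul,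
        ← Complex.exp_add, ← Complex.exp_pi_mul_I]
      congr 1
      simp only [map_mul, Complex.conj_ofReal, Complex.conj_I]
      push_cast
      field_simp
      ring
    have hrot := (rotation c).measurePreserving.integral_comp
      (rotation c).toHomeomorph.measurableEmbedding
      fun z : ℂ ↦ (Real.exp (-‖z‖ ^ 2) : ℂ) * (z ^ a * conj z ^ b)
    rw [← self_eq_neg, ← integral_neg, ← hrot]
    congr with z
    rw [LinearIsometryEquiv.norm_map, rotation_apply, map_mul, mul_pow, mul_pow,
      mul_mul_mul_comm (_ ^ a), hphase]
    ring

variable {ι α : Type*} [Fintype ι]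

/-- The coordinates of the product vector `z^{⊗ι}`, indexed by words `ι → α`. -/
def tensorPower {M : Type*} [CommMonoid M] (ι : Type*) [Fintype ι] (z : α → M) : (ι → α) → M :=
  fun w ↦ ∏ i, z (w i)

variable [Fintype α]

lemma integral_exp_neg_norm_sq_mul_prod_pow_mul_conj_pow (p q : α → ℕ) :
    ∫ z : α → ℂ, (Real.exp (-‖WithLp.toLp 2 z‖ ^ 2) : ℂ) * ∏ a, (z a ^ p a * conj (z a) ^ q a) =
      Real.pi ^ Fintype.card α * ∏ a, if p a = q a then ((p a)! : ℂ) else 0 := by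
  have hsplit (z : α → ℂ) :
      (Real.exp (-‖WithLp.toLp 2 z‖ ^ 2) : ℂ) * ∏ a, (z a ^ p a * conj (z a) ^ q a) =
        ∏ a, (Real.exp (-‖z a‖ ^ 2) : ℂ) * (z a ^ p a * conj (z a) ^ q a) := by
    rw [EuclideanSpace.norm_sq_eq, ← Finset.sum_neg_distrib, Real.exp_sum, Complex.ofReal_prod,
      ← Finset.prod_mul_distrib]
  simp_rw [hsplit]
  rw [integral_fintype_prod_volume_eq_prod
    fun a (z : ℂ) ↦ (Real.exp (-‖z‖ ^ 2) : ℂ) * (z ^ p a * conj z ^ q a)]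
  simp_rw [integral_exp_neg_norm_sq_mul_pow_mul_conj_pow, ← mul_ite_zero]
  rw [Finset.prod_mul_distrib, Finset.prod_const, Finset.card_univ]

lemma integral_exp_neg_norm_sq_mul_tensorPower_mul_conj [DecidableEq ι] [DecidableEq α]
    (w w' : ι → α) :
    ∫ z : α → ℂ, (Real.exp (-‖WithLp.toLp 2 z‖ ^ 2) : ℂ) *
        (tensorPower ι z w * conj (tensorPower ι z w')) =
      Real.pi ^ Fintype.card α * Fintype.card {σ : Equiv.Perm ι // w ∘ σ = w'} := by
  simp_rw [tensorPower, prod_comp_eq_prod_pow_letterCount, map_prod, map_pow,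
    ← Finset.prod_mul_distrib]
  rw [integral_exp_neg_norm_sq_mul_prod_pow_mul_conj_pow, card_perm_comp_eq_self]
  push_cast
  rfl

end Gaussian

section Sphere

variable (α : Type*) [Fintype α]

/-- Lebesgue measure on `ℂ^α` with its Euclidean norm. It is defined as the image of the product
measure, not by the normalization of the inner product space, so that integrals against it are
integrals over `α → ℂ`. -/
noncomputable def euclideanVolume : Measure (EuclideanSpace ℂ α) :=
  (volume : Measure (α → ℂ)).map (WithLp.toLp 2)

instance : (euclideanVolume α).IsAddHaarMeasure :=
  (PiLp.continuousLinearEquiv 2 ℝ fun _ : α ↦ ℂ).symm.isAddHaarMeasure_map volume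

lemma integral_euclideanVolume {F : Type*} [NormedAddCommGroup F] [NormedSpace ℝ F]
    (f : EuclideanSpace ℂ α → F) :
    ∫ x, f x ∂euclideanVolume α = ∫ z : α → ℂ, f (WithLp.toLp 2 z) :=
  integral_map_equiv (MeasurableEquiv.toLp 2 (α → ℂ)) f

/-- The uniform probability measure on the unit sphere of `ℂ^α`, i.e. on pure states. -/
noncomputable def unitSphereMeasure : Measure (sphere (0 : EuclideanSpace ℂ α) 1) :=
  ((euclideanVolume α).toSphere univ)⁻¹ • (euclideanVolume α).toSphere

instance [Nonempty α] : NeZero (euclideanVolume α).toSphere :=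
  ⟨Measure.toSphere_ne_zero _⟩

instance [Nonempty α] : IsProbabilityMeasure (unitSphereMeasure α) := by
  unfold unitSphereMeasure
  infer_instance

variable {α} in
lemma integrable_unitSphereMeasure_of_continuous [Nonempty α] {E : Type*} [NormedAddCommGroup E]
    {f : sphere (0 : EuclideanSpace ℂ α) 1 → E} (hf : Continuous f) :
    Integrable f (unitSphereMeasure α) :=
  hf.integrable_of_hasCompactSupport (.of_compactSpace f)

lemma integral_exp_neg_norm_sq_mul_of_homogeneous [Nonempty α] {f : EuclideanSpace ℂ α → ℂ} {k : ℕ}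
    (hf : ∀ r : ℝ, 0 < r → ∀ x, f (r • x) = r ^ (2 * k) • f x) :
    ∫ x, (Real.exp (-‖x‖ ^ 2) : ℂ) * f x ∂euclideanVolume α =
      (((Fintype.card α - 1 + k)! / 2 : ℝ) : ℂ) * ∫ x, f x.1 ∂(euclideanVolume α).toSphere := by
  have hexponent : Module.finrank ℝ (EuclideanSpace ℂ α) - 1 + 2 * k =
      2 * (Fintype.card α - 1 + k) + 1 := by
    rw [finrank_real_of_complex, finrank_euclideanSpace]
    have := Fintype.card_pos (α := α)
    omega
  rw [← integral_pow_mul_exp_neg_sq, ← hexponent]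
  simpa only [Complex.real_smul] using
    integral_norm_smul_of_homogeneous (euclideanVolume α) hf fun r ↦ Real.exp (-r ^ 2)

variable {α} in
lemma ascFactorial_mul_integral_unitSphereMeasure [Nonempty α] {f : EuclideanSpace ℂ α → ℂ}
    {k : ℕ} (hf : ∀ r : ℝ, 0 < r → ∀ x, f (r • x) = r ^ (2 * k) • f x) :
    Real.pi ^ Fintype.card α *
        ((Fintype.card α).ascFactorial k * ∫ x, f x.1 ∂unitSphereMeasure α) =
      ∫ z : α → ℂ, (Real.exp (-‖WithLp.toLp 2 z‖ ^ 2) : ℂ) * f (WithLp.toLp 2 z) := by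
  have hmass := integral_exp_neg_norm_sq_mul_of_homogeneous α (f := fun _ ↦ 1) (k := 0) (by simp)
  have hmom := integral_exp_neg_norm_sq_mul_of_homogeneous α hf
  have hgauss := integral_exp_neg_norm_sq_mul_prod_pow_mul_conj_pow (α := α) 0 0
  simp only [Pi.zero_apply, pow_zero, mul_one, Finset.prod_const_one, if_true,
    Nat.factorial_zero, Nat.cast_one] at hgauss
  simp only [integral_euclideanVolume, mul_one, hgauss] at hmass hmom
  rw [hmom, hmass, unitSphereMeasure, integral_smul_measure]
  obtain ⟨d, hd⟩ := Nat.exists_eq_add_one.2 (Fintype.card_pos (α := α))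
  have hpos : (euclideanVolume α).toSphere.real univ ≠ 0 := measureReal_univ_ne_zero
  rw [hd, Nat.add_sub_cancel, integral_const, ENNReal.toReal_inv, ← measureReal_def,
    Complex.real_smul, Complex.real_smul, Nat.add_zero, mul_one,
    ← Nat.factorial_mul_ascFactorial]
  push_cast
  field_simp

end Sphere

section SymmetricProjection

variable {R ι α : Type*} [Semiring R] [StarRing R] [Fintype ι] [DecidableEq ι] [Fintype α]

/-- `P` is the orthogonal projection `Π^{(k)}` of `H^{⊗ι}` onto its symmetric subspace, `k` being
the number of elements of `ι`. Symmetry of the range is stated for the vectors `P u`. -/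
structure IsSymmetricProjection (P : Matrix (ι → α) (ι → α) R) : Prop where
  isHermitian : P.IsHermitian
  mulVec_comp_perm (u : (ι → α) → R) (σ : Equiv.Perm ι) (w : ι → α) :
    (P *ᵥ u) (w ∘ σ) = (P *ᵥ u) w
  mulVec_eq_self (u : (ι → α) → R) (hu : ∀ (σ : Equiv.Perm ι) (w : ι → α), u (w ∘ σ) = u w) :
    P *ᵥ u = u

namespace IsSymmetricProjection

variable {P Q X Y : Matrix (ι → α) (ι → α) R}

lemma apply_comp_perm (hP : IsSymmetricProjection P) (σ : Equiv.Perm ι) (w w' : ι → α) :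
    P (w ∘ σ) w' = P w w' := by
  classical
  simpa using hP.mulVec_comp_perm (Pi.single w' 1) σ w

lemma mul_eq_self (hP : IsSymmetricProjection P)
    (hY : ∀ (σ : Equiv.Perm ι) (w w' : ι → α), Y (w ∘ σ) w' = Y w w') : P * Y = Y := by
  ext w w'
  exact congrFun (hP.mulVec_eq_self (fun w ↦ Y w w') fun σ w ↦ hY σ w w') w

protected lemma unique (hP : IsSymmetricProjection P) (hQ : IsSymmetricProjection Q) : P = Q := by
  have h := congrArg conjTranspose (hP.mul_eq_self hQ.apply_comp_perm)
  rw [conjTranspose_mul, hP.isHermitian.eq, hQ.isHermitian.eq] at h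
  exact (hQ.mul_eq_self hP.apply_comp_perm).symm.trans h

lemma mul_mul_eq_mul_right (hP : IsSymmetricProjection P)
    (hX : ∀ σ : Equiv.Perm ι, X.submatrix (· ∘ σ) (· ∘ σ) = X) : P * X * P = X * P := by
  rw [Matrix.mul_assoc]
  refine hP.mul_eq_self fun σ w w' ↦ ?_
  have hXσ (u : ι → α) : X (w ∘ σ) (u ∘ σ) = X w u := congrFun₂ (hX σ) w u
  simp only [Matrix.mul_apply]
  rw [← (σ.symm.arrowCongr (.refl α)).sum_comp]
  refine Finset.sum_congr rfl fun u _ ↦ ?_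
  exact congrArg₂ (· * ·) (hXσ u) (hP.apply_comp_perm σ u w')

lemma mul_mul_eq_mul_left (hP : IsSymmetricProjection P)
    (hX : ∀ σ : Equiv.Perm ι, X.submatrix (· ∘ σ) (· ∘ σ) = X) : P * X * P = P * X := by
  have h := congrArg conjTranspose (hP.mul_mul_eq_mul_right (X := Xᴴ) fun σ ↦ by
    rw [← conjTranspose_submatrix, hX σ])
  simpa only [conjTranspose_mul, conjTranspose_conjTranspose, hP.isHermitian.eq,
    ← Matrix.mul_assoc] using h

end IsSymmetricProjection

variable (ι α) (𝕜 : Type*) [Field 𝕜] [DecidableEq α]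

/-- The average of the permutation operators on `H^{⊗ι}`, which realizes the symmetric projection.
Its entries are written as counts of permutations, the form in which Gaussian moments give them. -/
noncomputable def symmetrizer : Matrix (ι → α) (ι → α) 𝕜 :=
  of fun w w' ↦ Fintype.card {σ : Equiv.Perm ι // w ∘ σ = w'} / (Fintype.card ι)!

lemma symmetrizer_mulVec (u : (ι → α) → 𝕜) (w : ι → α) :
    (symmetrizer ι α 𝕜 *ᵥ u) w = (∑ σ : Equiv.Perm ι, u (w ∘ σ)) / (Fintype.card ι)! := by
  simp only [symmetrizer, mulVec, dotProduct, of_apply, Fintype.card_subtype,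
    div_mul_eq_mul_div, ← Finset.sum_div]
  congr 1
  rw [← Finset.sum_fiberwise' _ _ u]
  simp

lemma isSymmetricProjection_symmetrizer [CharZero 𝕜] [StarRing 𝕜] :
    IsSymmetricProjection (symmetrizer ι α 𝕜) where
  isHermitian := by
    ext w w'
    have e : {σ : Equiv.Perm ι // w' ∘ σ = w} ≃ {σ : Equiv.Perm ι // w ∘ σ = w'} :=
      (Equiv.inv _).subtypeEquiv fun σ ↦ by
        rw [Equiv.inv_apply, Equiv.Perm.inv_def, Equiv.comp_symm_eq, eq_comm]
    simp [symmetrizer, Fintype.card_congr e]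
  mulVec_comp_perm u σ w := by
    rw [symmetrizer_mulVec, symmetrizer_mulVec,
      ← Equiv.sum_comp (Equiv.mulLeft σ) fun τ ↦ u (w ∘ τ)]
    rfl
  mulVec_eq_self u hu := by
    ext w
    rw [symmetrizer_mulVec]
    simp [hu, Fintype.card_perm, Nat.factorial_ne_zero]

end SymmetricProjection

section MatrixTrace

variable {R m : Type*} [Fintype m]

lemma trace_submatrix_equiv {k : Type*} [Fintype k] [AddCommMonoid R] (e : k ≃ m)
    (A : Matrix m m R) : (A.submatrix e e).trace = A.trace :=
  e.sum_comp A.diag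

lemma trace_vecMulVec_mul [CommSemiring R] (u v : m → R) (Y : Matrix m m R) :
    (vecMulVec u v * Y).trace = v ⬝ᵥ Y *ᵥ u := by
  rw [vecMulVec_mul, trace_vecMulVec, dotProduct_mulVec, dotProduct_comm]

lemma trace_vecMulVec_mul_vecMulVec_mul [CommSemiring R] (u v : m → R) (X Y : Matrix m m R) :
    (vecMulVec u v * X * vecMulVec u v * Y).trace = (v ⬝ᵥ X *ᵥ u) * (v ⬝ᵥ Y *ᵥ u) := by
  rw [vecMulVec_mul, vecMulVec_mul_vecMulVec, ← dotProduct_mulVec, vecMulVec_smul,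
    Matrix.smul_mul, trace_smul, trace_vecMulVec_mul, smul_eq_mul]

lemma trace_sub_mul_mul_sub_mul [CommRing R] (A B X Y : Matrix m m R) :
    ((A - B) * X * (A - B) * Y).trace =
      (A * X * A * Y).trace - (A * (X * B * Y + Y * B * X)).trace + (B * X * B * Y).trace := by
  have hcross : (B * X * A * Y).trace = (A * (Y * B * X)).trace := by
    rw [Matrix.mul_assoc, trace_mul_comm]
    simp only [Matrix.mul_assoc]
  rw [Matrix.mul_add, trace_add, ← hcross]
  simp only [Matrix.sub_mul, Matrix.mul_sub, trace_sub, Matrix.mul_assoc]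
  ring

lemma trace_mul_nonneg_of_posSemidef {𝕜 : Type*} [RCLike 𝕜] {X Y : Matrix m m 𝕜}
    (hX : X.PosSemidef) (hY : Y.PosSemidef) : 0 ≤ (X * Y).trace := by
  classical
  open scoped MatrixOrder Matrix.Norms.L2Operator in
  obtain ⟨A, rfl⟩ := CStarAlgebra.nonneg_iff_eq_star_mul_self.1 hX.nonneg
  rw [Matrix.mul_assoc, trace_mul_comm]
  exact (hY.mul_mul_conjTranspose_same A).trace_nonneg

end MatrixTrace

section SecondMoment

variable {𝕜 m Ω : Type*} [RCLike 𝕜] [MeasurableSpace Ω]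

/-- The matrix `∫ v v† dμ` of second moments of a random vector `v`, integrated entrywise. -/
noncomputable def secondMoment (μ : Measure Ω) (v : Ω → m → 𝕜) : Matrix m m 𝕜 :=
  of fun i j ↦ ∫ ω, vecMulVec (v ω) (star (v ω)) i j ∂μ

lemma isHermitian_secondMoment (μ : Measure Ω) (v : Ω → m → 𝕜) :
    (secondMoment μ v).IsHermitian := by
  ext i j
  simp [secondMoment, vecMulVec_apply, ← integral_conj, mul_comm]

variable [Fintype m] {μ : Measure Ω} {v : Ω → m → 𝕜}

lemma integrable_star_dotProduct_mulVec
    (hv : ∀ i j, Integrable (fun ω ↦ vecMulVec (v ω) (star (v ω)) i j) μ) (Y : Matrix m m 𝕜) :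
    Integrable (fun ω ↦ star (v ω) ⬝ᵥ Y *ᵥ v ω) μ := by
  simp_rw [← trace_vecMulVec_mul, trace, diag, mul_apply]
  exact integrable_finsetSum _ fun i _ ↦ integrable_finsetSum _ fun j _ ↦ (hv i j).mul_const _

lemma trace_secondMoment_mul
    (hv : ∀ i j, Integrable (fun ω ↦ vecMulVec (v ω) (star (v ω)) i j) μ) (Y : Matrix m m 𝕜) :
    (secondMoment μ v * Y).trace = ∫ ω, star (v ω) ⬝ᵥ Y *ᵥ v ω ∂μ := by
  simp_rw [← trace_vecMulVec_mul, trace, diag, mul_apply]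
  rw [integral_finsetSum _ fun i _ ↦ integrable_finsetSum _ fun j _ ↦ (hv i j).mul_const _]
  refine Finset.sum_congr rfl fun i _ ↦ ?_
  rw [integral_finsetSum _ fun j _ ↦ (hv i j).mul_const _]
  exact Finset.sum_congr rfl fun j _ ↦ (integral_mul_const _ _).symm

lemma trace_secondMoment_mul_secondMoment_mul_le_integral [IsProbabilityMeasure μ]
    (hv : ∀ i j, Integrable (fun ω ↦ vecMulVec (v ω) (star (v ω)) i j) μ) {X Y : Matrix m m 𝕜}
    (hX : X.PosSemidef) (hY : Y.PosSemidef)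
    (hXY : Integrable (fun ω ↦ (star (v ω) ⬝ᵥ X *ᵥ v ω) * (star (v ω) ⬝ᵥ Y *ᵥ v ω)) μ) :
    (secondMoment μ v * X * secondMoment μ v * Y).trace ≤
      ∫ ω, (star (v ω) ⬝ᵥ X *ᵥ v ω) * (star (v ω) ⬝ᵥ Y *ᵥ v ω) ∂μ := by
  set M := secondMoment μ v
  set Z := X * M * Y + Y * M * X
  -- Positivity of `Tr (K X K Y)` for `K = v v† - M`, whose mean vanishes.
  have hpointwise (ω : Ω) : star (v ω) ⬝ᵥ Z *ᵥ v ω - (M * X * M * Y).trace ≤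
      (star (v ω) ⬝ᵥ X *ᵥ v ω) * (star (v ω) ⬝ᵥ Y *ᵥ v ω) := by
    set K := vecMulVec (v ω) (star (v ω)) - M
    have hK : Kᴴ = K :=
      ((posSemidef_vecMulVec_self_star _).isHermitian.sub (isHermitian_secondMoment μ v)).eq
    have h := trace_mul_nonneg_of_posSemidef (hX.mul_mul_conjTranspose_same K) hY
    rw [hK, trace_sub_mul_mul_sub_mul, trace_vecMulVec_mul_vecMulVec_mul, trace_vecMulVec_mul] at h
    exact sub_nonneg.1 (h.trans_eq (sub_add _ _ _))
  have htwice : (M * Z).trace = (M * X * M * Y).trace + (M * X * M * Y).trace := by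
    rw [Matrix.mul_add, trace_add, Matrix.mul_assoc Y, ← Matrix.mul_assoc M Y,
      trace_mul_comm (M * Y)]
    simp only [Matrix.mul_assoc]
  calc
    (M * X * M * Y).trace = ∫ ω, (star (v ω) ⬝ᵥ Z *ᵥ v ω - (M * X * M * Y).trace) ∂μ := by
      rw [integral_sub (integrable_star_dotProduct_mulVec hv Z) (integrable_const _),
        ← trace_secondMoment_mul hv, htwice, integral_const, probReal_univ, one_smul,
        add_sub_cancel_right]
    _ ≤ _ := integral_mono ((integrable_star_dotProduct_mulVec hv Z).sub (integrable_const _)) hXY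
      hpointwise

end SecondMoment

section CoherentStates

lemma tensorPower_append {α M : Type*} [CommMonoid M] {m n : ℕ} (z : α → M) (u : Fin m → α)
    (w : Fin n → α) :
    tensorPower (Fin (m + n)) z (Fin.append u w) =
      tensorPower (Fin m) z u * tensorPower (Fin n) z w := by
  simp [tensorPower, Fin.prod_univ_add]

variable {α : Type*} [Fintype α]

lemma star_tensorPower_dotProduct_kronecker_mulVec {R : Type*} [CommSemiring R] [StarRing R]
    {m n : ℕ} (X : Matrix (Fin m → α) (Fin m → α) R) (Y : Matrix (Fin n → α) (Fin n → α) R)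
    (z : α → R) :
    star (tensorPower (Fin (m + n)) z) ⬝ᵥ
        (X ⊗ₖ Y).submatrix (Fin.appendEquiv m n).symm (Fin.appendEquiv m n).symm *ᵥ
          tensorPower (Fin (m + n)) z =
      (star (tensorPower (Fin m) z) ⬝ᵥ X *ᵥ tensorPower (Fin m) z) *
        (star (tensorPower (Fin n) z) ⬝ᵥ Y *ᵥ tensorPower (Fin n) z) := by
  set a := tensorPower (Fin m) z with ha
  set b := tensorPower (Fin n) z with hb
  set c := tensorPower (Fin (m + n)) z with hc
  have hprod : (vecMulVec c (star c)).submatrix (Fin.appendEquiv m n) (Fin.appendEquiv m n) =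
      vecMulVec a (star a) ⊗ₖ vecMulVec b (star b) := by
    ext p q
    simp only [submatrix_apply, vecMulVec_apply, kroneckerMap_apply, Fin.appendEquiv,
      Equiv.coe_fn_mk, Pi.star_apply, hc, tensorPower_append, star_mul', ← ha, ← hb]
    exact mul_mul_mul_comm ..
  simp only [← trace_vecMulVec_mul]
  rw [← trace_kronecker, mul_kronecker_mul, ← hprod, ← trace_submatrix_equiv (Fin.appendEquiv m n),
    ← submatrix_mul_equiv _ _ _ (Fin.appendEquiv m n), submatrix_submatrix,
    Equiv.symm_comp_self, submatrix_id_id]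

variable {ι : Type*} [Fintype ι]

variable (ι) in
lemma continuous_tensorPower :
    Continuous fun x : sphere (0 : EuclideanSpace ℂ α) 1 ↦ tensorPower ι x.1.ofLp := by
  unfold tensorPower
  fun_prop

lemma continuous_star_tensorPower_dotProduct_mulVec [DecidableEq ι]
    (Y : Matrix (ι → α) (ι → α) ℂ) :
    Continuous fun x : sphere (0 : EuclideanSpace ℂ α) 1 ↦
      star (tensorPower ι x.1.ofLp) ⬝ᵥ Y *ᵥ tensorPower ι x.1.ofLp :=
  (continuous_tensorPower ι).star.dotProduct
    (continuous_const.matrix_mulVec (continuous_tensorPower ι))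

variable [Nonempty α]

lemma integrable_vecMulVec_tensorPower (w w' : ι → α) :
    Integrable (fun x ↦ vecMulVec (tensorPower ι x.1.ofLp) (star (tensorPower ι x.1.ofLp)) w w')
      (unitSphereMeasure α) :=
  integrable_unitSphereMeasure_of_continuous <|
    (continuous_apply_apply w w').comp
      ((continuous_tensorPower ι).matrix_vecMulVec (continuous_tensorPower ι).star)

variable [DecidableEq ι]

lemma secondMoment_tensorPower {P : Matrix (ι → α) (ι → α) ℂ} (hP : IsSymmetricProjection P) :
    secondMoment (unitSphereMeasure α) (fun x ↦ tensorPower ι x.1.ofLp) =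
      ((Fintype.card ι + Fintype.card α - 1).choose (Fintype.card ι) : ℂ)⁻¹ • P := by
  classical
  rw [hP.unique (isSymmetricProjection_symmetrizer ι α ℂ)]
  ext w w'
  have hmoment := ascFactorial_mul_integral_unitSphereMeasure (k := Fintype.card ι)
    (f := fun x ↦ tensorPower ι x.ofLp w * conj (tensorPower ι x.ofLp w')) fun r _ x ↦ by
      simp only [tensorPower, PiLp.smul_apply, Complex.real_smul, Finset.prod_mul_distrib,
        Finset.prod_const, Finset.card_univ, map_mul, map_pow, Complex.conj_ofReal]
      push_cast
      ring
  have hpi : (Real.pi : ℂ) ^ Fintype.card α ≠ 0 :=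
    pow_ne_zero _ (Complex.ofReal_ne_zero.2 Real.pi_ne_zero)
  have hchoose : ((Fintype.card ι + Fintype.card α - 1).choose (Fintype.card ι) : ℂ) ≠ 0 := by
    have := Fintype.card_pos (α := α)
    exact_mod_cast (Nat.choose_pos (by omega)).ne'
  rw [integral_exp_neg_norm_sq_mul_tensorPower_mul_conj,
    Nat.ascFactorial_eq_factorial_mul_choose', add_comm (Fintype.card α)] at hmoment
  have hcount := mul_left_cancel₀ hpi hmoment
  push_cast at hcount
  rw [Matrix.smul_apply, smul_eq_mul, eq_inv_mul_iff_mul_eq₀ hchoose, symmetrizer, of_apply,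
    eq_div_iff (Nat.cast_ne_zero.2 (Nat.factorial_ne_zero _)), mul_right_comm,
    mul_comm _ ((Fintype.card ι)! : ℂ), ← hcount]
  rfl

lemma trace_symmetricProjection_mul_div_choose_eq_integral {P : Matrix (ι → α) (ι → α) ℂ}
    (hP : IsSymmetricProjection P) (Y : Matrix (ι → α) (ι → α) ℂ) :
    (P * Y).trace / (Fintype.card ι + Fintype.card α - 1).choose (Fintype.card ι) =
      ∫ x, star (tensorPower ι x.1.ofLp) ⬝ᵥ Y *ᵥ tensorPower ι x.1.ofLp ∂unitSphereMeasure α := by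
  rw [← trace_secondMoment_mul integrable_vecMulVec_tensorPower, secondMoment_tensorPower hP,
    Matrix.smul_mul, trace_smul, smul_eq_mul, div_eq_inv_mul]

end CoherentStates

section Biriffle

variable {α : Type*} [Fintype α]

lemma trace_symmetricProjection_mul_mul_nonneg {ι : Type*} [Fintype ι] [DecidableEq ι]
    {P X Y : Matrix (ι → α) (ι → α) ℂ} (hP : IsSymmetricProjection P) (hX : X.PosSemidef)
    (hY : Y.PosSemidef) (hinv : ∀ σ : Equiv.Perm ι, X.submatrix (· ∘ σ) (· ∘ σ) = X) :
    0 ≤ (P * (X * Y)).trace := by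
  have h := trace_mul_nonneg_of_posSemidef (hX.mul_mul_conjTranspose_same P) hY
  rwa [hP.isHermitian.eq, hP.mul_mul_eq_mul_left hinv, Matrix.mul_assoc] at h

variable [Nonempty α]

theorem trace_symmetricProjection_mul_mul_div_choose_sq_le {n : ℕ}
    {X Y : Matrix (Fin n → α) (Fin n → α) ℂ} (hX : X.PosSemidef) (hY : Y.PosSemidef)
    (hinv : ∀ σ : Equiv.Perm (Fin n), X.submatrix (· ∘ σ) (· ∘ σ) = X)
    {P : Matrix (Fin n → α) (Fin n → α) ℂ} (hP : IsSymmetricProjection P)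
    {Q : Matrix (Fin (n + n) → α) (Fin (n + n) → α) ℂ} (hQ : IsSymmetricProjection Q) :
    (P * (X * Y)).trace / ((n + Fintype.card α - 1).choose n) ^ 2 ≤
      (Q * (X ⊗ₖ Y).submatrix (Fin.appendEquiv n n).symm (Fin.appendEquiv n n).symm).trace /
        (n + n + Fintype.card α - 1).choose (n + n) := by
  set N := ((n + Fintype.card α - 1).choose n : ℂ)
  set v := fun x : sphere (0 : EuclideanSpace ℂ α) 1 ↦ tensorPower (Fin n) x.1.ofLp
  have hM : secondMoment (unitSphereMeasure α) v = N⁻¹ • P := by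
    simpa only [Fintype.card_fin] using secondMoment_tensorPower hP
  have hQint := trace_symmetricProjection_mul_div_choose_eq_integral hQ
    ((X ⊗ₖ Y).submatrix (Fin.appendEquiv n n).symm (Fin.appendEquiv n n).symm)
  simp only [Fintype.card_fin, star_tensorPower_dotProduct_kronecker_mulVec] at hQint
  calc
    (P * (X * Y)).trace / N ^ 2 =
        (secondMoment (unitSphereMeasure α) v * X * secondMoment (unitSphereMeasure α) v *
          Y).trace := by
      rw [hM, ← Matrix.mul_assoc, ← hP.mul_mul_eq_mul_left hinv]
      simp only [Matrix.smul_mul, Matrix.mul_smul, trace_smul, smul_eq_mul]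
      ring
    _ ≤ ∫ x, (star (v x) ⬝ᵥ X *ᵥ v x) * (star (v x) ⬝ᵥ Y *ᵥ v x) ∂unitSphereMeasure α :=
      trace_secondMoment_mul_secondMoment_mul_le_integral integrable_vecMulVec_tensorPower hX hY
        (integrable_unitSphereMeasure_of_continuous
          ((continuous_star_tensorPower_dotProduct_mulVec X).mul
            (continuous_star_tensorPower_dotProduct_mulVec Y)))
    _ = _ := hQint.symm

theorem biriffle_trace_lower_bound_general {n : ℕ} (hn : 0 < n)
    {X₁ X₂ : Matrix (Fin n → α) (Fin n → α) ℂ} (hX₁ : X₁.PosSemidef) (hX₂ : X₂.PosSemidef)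
    (hinv₁ : ∀ σ : Equiv.Perm (Fin n), X₁.submatrix (· ∘ σ) (· ∘ σ) = X₁)
    {P : Matrix (Fin n → α) (Fin n → α) ℂ} (hP : IsSymmetricProjection P)
    {Q : Matrix (Fin (n + n) → α) (Fin (n + n) → α) ℂ} (hQ : IsSymmetricProjection Q) :
    0 ≤ (P * (X₁ * X₂)).trace.re / ((n + Fintype.card α - 1).choose n : ℝ) /
        (2 * n : ℝ) ^ (Fintype.card α - 1) ∧
    (P * (X₁ * X₂)).trace.re / ((n + Fintype.card α - 1).choose n : ℝ) /
        (2 * n : ℝ) ^ (Fintype.card α - 1) ≤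
      (Q * (X₁ ⊗ₖ X₂).submatrix (Fin.appendEquiv n n).symm (Fin.appendEquiv n n).symm).trace.re /
        ((n + n + Fintype.card α - 1).choose (n + n) : ℝ) := by
  have htrace := (Complex.le_def.1 (trace_symmetricProjection_mul_mul_nonneg hP hX₁ hX₂ hinv₁)).1
  have hsharp :=
    (Complex.le_def.1 (trace_symmetricProjection_mul_mul_div_choose_sq_le hX₁ hX₂ hinv₁ hP hQ)).1
  have hdim : (n + Fintype.card α - 1).choose n ≤ (2 * n) ^ (Fintype.card α - 1) := by
    rw [Nat.add_sub_assoc Fintype.card_pos]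
    calc
      (n + (Fintype.card α - 1)).choose n ≤ (n + 1) ^ (Fintype.card α - 1) :=
        Nat.choose_symm_add.trans_le (Nat.choose_add_le_add_one_pow _ _)
      _ ≤ (2 * n) ^ (Fintype.card α - 1) := Nat.pow_le_pow_left (by omega) _
  have hchoose : 0 < (n + Fintype.card α - 1).choose n := Nat.choose_pos (by
    have := Fintype.card_pos (α := α)
    omega)
  refine ⟨div_nonneg (div_nonneg htrace (Nat.cast_nonneg _)) (by positivity),
    le_trans ?_ (hsharp.trans_eq ?_)⟩
  · rw [← Complex.ofReal_natCast, ← Complex.ofReal_pow, Complex.div_ofReal_re, div_div, sq]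
    gcongr
    exact_mod_cast hdim
  · rw [← Complex.ofReal_natCast, Complex.div_ofReal_re]

end Biriffle

/-- Quantitative lower bound for the biriffle pairing: for positive semidefinite,
`S_n`-invariant operators `X₁, X₂` on `H^{⊗n}`, with `Σ̄_k` the normalized projection onto the
symmetric subspace of `H^{⊗k}` (here characterized by the hypotheses on `Pn` and `P2`),
`Tr(Σ̄_{2n}(X₁ ⊗ X₂)) ≥ Tr(Σ̄_n(X₁X₂)) / (2n)^{d−1} ≥ 0`. -/
theorem biriffle_trace_lower_bound (d n : ℕ) (hd : 0 < d) (hn : 0 < n)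
    (X₁ X₂ : Matrix (Fin n → Fin d) (Fin n → Fin d) ℂ)
    (hX₁ : X₁.PosSemidef) (hX₂ : X₂.PosSemidef)
    (hinv₁ : ∀ π : Equiv.Perm (Fin n),
      X₁.submatrix (fun ι : Fin n → Fin d => ι ∘ π) (fun κ : Fin n → Fin d => κ ∘ π) = X₁)
    (hinv₂ : ∀ π : Equiv.Perm (Fin n),
      X₂.submatrix (fun ι : Fin n → Fin d => ι ∘ π) (fun κ : Fin n → Fin d => κ ∘ π) = X₂)
    (Pn : Matrix (Fin n → Fin d) (Fin n → Fin d) ℂ)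
    (hPnherm : Pn.IsHermitian)
    (hPnrange : ∀ (w : (Fin n → Fin d) → ℂ) (π : Equiv.Perm (Fin n)) (ι : Fin n → Fin d),
      Pn.mulVec w (ι ∘ π) = Pn.mulVec w ι)
    (hPnfix : ∀ w : (Fin n → Fin d) → ℂ,
      (∀ (π : Equiv.Perm (Fin n)) (ι : Fin n → Fin d), w (ι ∘ π) = w ι) → Pn.mulVec w = w)
    (P2 : Matrix (Fin (n + n) → Fin d) (Fin (n + n) → Fin d) ℂ)
    (hP2herm : P2.IsHermitian)
    (hP2range : ∀ (w : (Fin (n + n) → Fin d) → ℂ) (π : Equiv.Perm (Fin (n + n)))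
        (ι : Fin (n + n) → Fin d), P2.mulVec w (ι ∘ π) = P2.mulVec w ι)
    (hP2fix : ∀ w : (Fin (n + n) → Fin d) → ℂ,
      (∀ (π : Equiv.Perm (Fin (n + n))) (ι : Fin (n + n) → Fin d), w (ι ∘ π) = w ι) →
        P2.mulVec w = w) :
    0 ≤ (Pn * (X₁ * X₂)).trace.re / ((n + d - 1).choose n : ℝ) / ((2 * n : ℝ)) ^ (d - 1) ∧
    (Pn * (X₁ * X₂)).trace.re / ((n + d - 1).choose n : ℝ) / ((2 * n : ℝ)) ^ (d - 1)
      ≤ (P2 * ((X₁ ⊗ₖ X₂).submatrix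
            (fun ι : Fin (n + n) → Fin d =>
              (fun i : Fin n => ι (Fin.castAdd n i), fun i : Fin n => ι (Fin.natAdd n i)))
            (fun κ : Fin (n + n) → Fin d =>
              (fun i : Fin n => κ (Fin.castAdd n i), fun i : Fin n => κ (Fin.natAdd n i))))).trace.re
          / ((n + n + d - 1).choose (n + n) : ℝ) := by
  have : Nonempty (Fin d) := Fin.pos_iff_nonempty.1 hd
  have h := biriffle_trace_lower_bound_general hn hX₁ hX₂ hinv₁ ⟨hPnherm, hPnrange, hPnfix⟩
    ⟨hP2herm, hP2range, hP2fix⟩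
  rwa [Fintype.card_fin] at h
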